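/- arXiv:math/0603346 — 3 statements merged into one kernel-verified Lean document; each statement's English description precedes it below -/
import Mathlib

section
/- Let φ(x) = exp(-x²), let λ > 0 be fixed, and let (c_k)_{k∈ℤ} be complex coefficients with Σ_{k∈ℤ} |c_k|² < ∞. Define f(x) = Σ_{k=-∞}^{∞} c_k φ(x - λk). Then ‖f‖_{L²(ℝ)}² ≥ μ(λ) · Σ_{k∈ℤ} |c_k|², where μ(λ) := (2π/λ) · inf_{ω∈ℝ} Σ_{l∈ℤ} |φ̂((ω + 2πl)/λ)|². -/
open MeasureTheory Real

/-- The Gaussian `φ(x) = exp(-x²)`. -/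
noncomputable def gauss (x : ℝ) : ℝ := Real.exp (-x ^ 2)

/-- The Fourier transform of the Gaussian: `φ̂(ω) = (1/√2) exp(-ω²/4)`. -/
noncomputable def gaussFT (w : ℝ) : ℝ := (1 / Real.sqrt 2) * Real.exp (-w ^ 2 / 4)

open scoped ComplexConjugate

lemma aux_summable_gauss {s : ℝ} (hs : 0 < s) : Summable fun k : ℤ => Real.exp (-s * (k : ℝ) ^ 2) := by
  have h := summable_pow_mul_jacobiTheta₂_term_bound 0 (T := s / π) (by positivity) 0
  refine h.congr fun k => ?_
  have : -π * (s / π * (k : ℝ) ^ 2 - 2 * 0 * |(k : ℝ)|) = -s * (k : ℝ) ^ 2 := by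
    field_simp
    ring
  simp only [pow_zero, one_mul]
  push_cast
  rw [this]

lemma aux_overlap (a b : ℝ) :
    ∫ x : ℝ, gauss (x - a) * gauss (x - b) = √(π / 2) * Real.exp (-(a - b) ^ 2 / 2) := by
  have h1 : ∀ x : ℝ, gauss (x - a) * gauss (x - b) =
      (fun y => Real.exp (-(a - b) ^ 2 / 2) * Real.exp (-2 * y ^ 2)) (x - (a + b) / 2) := by
    intro x
    simp only [gauss, ← Real.exp_add]
    congr 1
    ring
  simp_rw [h1]
  rw [integral_sub_right_eq_self (μ := volume)
    (fun y => Real.exp (-(a - b) ^ 2 / 2) * Real.exp (-2 * y ^ 2)), integral_const_mul,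
    integral_gaussian]
  ring

lemma aux_overlap_int (a b : ℝ) : Integrable fun x : ℝ => gauss (x - a) * gauss (x - b) := by
  have h1 : (fun x : ℝ => gauss (x - a) * gauss (x - b)) = fun x => 
      (fun y => Real.exp (-(a - b) ^ 2 / 2) * Real.exp (-2 * y ^ 2)) (x - (a + b) / 2) := by
    funext x
    simp only [gauss, ← Real.exp_add]
    congr 1
    ring
  rw [h1]
  exact ((integrable_exp_neg_mul_sq (by norm_num)).const_mul _).comp_sub_right _

lemma aux_FT (lam : ℝ) (hlam : 0 < lam) (n : ℤ) :
    ∫ t : ℝ, ((2 * π / lam * gaussFT (2 * π * t / lam) ^ 2 : ℝ) : ℂ) *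
      Complex.exp (2 * π * Complex.I * n * t) =
      ((√(π / 2) * Real.exp (-(lam * n) ^ 2 / 2) : ℝ) : ℂ) := by
  have hb : 0 < 2 * π ^ 2 / lam ^ 2 := by positivity
  have h1 : ∀ t : ℝ, ((2 * π / lam * gaussFT (2 * π * t / lam) ^ 2 : ℝ) : ℂ) *
      Complex.exp (2 * π * Complex.I * n * t) = ((π / lam : ℝ) : ℂ) * 
      (Complex.exp (Complex.I * (2 * π * n) * t) *
        Complex.exp (-((2 * π ^ 2 / lam ^ 2 : ℝ) : ℂ) * t ^ 2)) := by
    intro t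
    have : 2 * π / lam * gaussFT (2 * π * t / lam) ^ 2 =
        π / lam * Real.exp (-(2 * π ^ 2 / lam ^ 2) * t ^ 2) := by
      simp only [gaussFT, mul_pow, ← Real.exp_nat_mul, div_pow, Real.sq_sqrt zero_le_two]
      have : ((2 : ℕ) : ℝ) * (-(2 ^ 2 * π ^ 2 * t ^ 2 / lam ^ 2) / 4) = -(2 * π ^ 2 / lam ^ 2) * t ^ 2 := by
        push_cast; ring
      rw [this]; ring
    rw [this]
    push_cast
    ring_nf
  simp_rw [h1]
  rw [integral_const_mul, fourierIntegral_gaussian (by rw [Complex.ofReal_re]; exact hb)]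
  have h2 : ((π : ℂ) / ((2 * π ^ 2 / lam ^ 2 : ℝ) : ℂ)) ^ (1 / 2 : ℂ) = ((√(π / (2 * π ^ 2 / lam ^ 2)) : ℝ) : ℂ) := by
    rw [Real.sqrt_eq_rpow, Complex.ofReal_cpow (by positivity)]
    push_cast; rfl
  have h3 : -(2 * π * n : ℂ) ^ 2 / (4 * ((2 * π ^ 2 / lam ^ 2 : ℝ) : ℂ)) =
      ((-(lam * n) ^ 2 / 2 : ℝ) : ℂ) := by
    have : (π : ℂ) ≠ 0 := by exact_mod_cast pi_ne_zero
    have : (lam : ℂ) ≠ 0 := by exact_mod_cast hlam.ne'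
    push_cast
    field_simp
    ring
  rw [h2, h3, ← Complex.ofReal_exp, ← Complex.ofReal_mul, ← Complex.ofReal_mul, ← mul_assoc]
  congr 2
  rw [show π / 2 = (π / lam) ^ 2 * (π / (2 * π ^ 2 / lam ^ 2)) by field_simp,
    Real.sqrt_mul (by positivity), Real.sqrt_sq (by positivity)]

lemma aux_orth (n : ℤ) : ∫ t in Set.Ioc (0 : ℝ) 1, Complex.exp (2 * π * Complex.I * n * t) =
    if n = 0 then 1 else 0 := by
  split_ifs with h
  · simp [h]
  · rw [← intervalIntegral.integral_of_le zero_le_one, integral_exp_mul_complex]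
    · have := Complex.exp_int_mul_two_pi_mul_I n
      rw [show (n : ℂ) * (2 * π * Complex.I) = 2 * π * Complex.I * n by ring] at this
      simp [this]
    · simp [h, pi_ne_zero]

lemma aux_quad (ν : Measure ℝ) (W : ℝ → ℝ) (hW : Integrable W ν) (c : ℤ → ℂ) (F : Finset ℤ) :
    ((∫ t, W t * ‖∑ k ∈ F, c k * Complex.exp (2 * π * Complex.I * k * t)‖ ^ 2 ∂ν : ℝ) : ℂ) =
    ∑ p ∈ F ×ˢ F, c p.1 * conj (c p.2) *
      ∫ t, (W t : ℂ) * Complex.exp (2 * π * Complex.I * ((p.1 - p.2 : ℤ) : ℂ) * t) ∂ν := by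
  have hint : ∀ n : ℤ, Integrable (fun t : ℝ => (W t : ℂ) * Complex.exp (2 * π * Complex.I * n * t)) ν := by
    intro n
    refine hW.ofReal.mul_bdd (c := 1) (by fun_prop) (ae_of_all _ fun t => ?_)
    rw [show (2 * π * Complex.I * n * t : ℂ) = ((2 * π * n * t : ℝ) : ℂ) * Complex.I by push_cast; ring,
      Complex.norm_exp_ofReal_mul_I]
  rw [← integral_complex_ofReal]
  simp_rw [← integral_const_mul]
  rw [← integral_finsetSum _ (fun p _ => (hint _).const_mul _)]
  congr 1
  funext t
  rw [Finset.sum_product]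
  push_cast
  rw [← Complex.mul_conj', map_sum, Finset.sum_mul_sum, Finset.mul_sum]
  refine Finset.sum_congr rfl fun j _ => ?_
  rw [Finset.mul_sum]
  refine Finset.sum_congr rfl fun k _ => ?_
  rw [map_mul, ← Complex.exp_conj]
  have : Complex.exp (2 * π * Complex.I * (j - k) * t) = Complex.exp (2 * π * Complex.I * j * t) *
      Complex.exp (conj (2 * π * Complex.I * k * t)) := by
    rw [← Complex.exp_add]
    congr 1
    have h2 : conj (2 : ℂ) = 2 := Complex.conj_ofNat 2
    simp only [map_mul, Complex.conj_ofReal, Complex.conj_I, map_intCast, h2]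
    ring
  rw [this]
  ring

lemma aux_integrable_H (lam : ℝ) (hlam : 0 < lam) :
    Integrable fun t : ℝ => 2 * π / lam * gaussFT (2 * π * t / lam) ^ 2 := by
  have h : (fun t : ℝ => 2 * π / lam * gaussFT (2 * π * t / lam) ^ 2) = fun t => 
        π / lam * Real.exp (-(2 * π ^ 2 / lam ^ 2) * t ^ 2) := by
    funext t
    simp only [gaussFT, mul_pow, ← Real.exp_nat_mul, div_pow, Real.sq_sqrt zero_le_two]
    have : ((2 : ℕ) : ℝ) * (-(2 ^ 2 * π ^ 2 * t ^ 2 / lam ^ 2) / 4) = -(2 * π ^ 2 / lam ^ 2) * t ^ 2 := by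
      push_cast; ring
    rw [this]; ring
  rw [h]
  exact (integrable_exp_neg_mul_sq (by positivity)).const_mul _

/-- the uniform bound on the unit interval -/
lemma aux_H_bound (lam : ℝ) (hlam : 0 < lam) (t : ℝ) (ht : t ∈ Set.Icc (0 : ℝ) 1) (n : ℤ) :
    ‖2 * π / lam * gaussFT (2 * π * (t + n) / lam) ^ 2‖ ≤
      (π / lam * Real.exp (2 * π ^ 2 / lam ^ 2)) * Real.exp (-(π ^ 2 / lam ^ 2) * (n : ℝ) ^ 2) := by
  have : 2 * π / lam * gaussFT (2 * π * (t + n) / lam) ^ 2 =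
        π / lam * Real.exp (-(2 * π ^ 2 / lam ^ 2) * (t + n) ^ 2) := by
    simp only [gaussFT, mul_pow, ← Real.exp_nat_mul, div_pow, Real.sq_sqrt zero_le_two]
    have : ((2 : ℕ) : ℝ) * (-(2 ^ 2 * π ^ 2 * (t + n) ^ 2 / lam ^ 2) / 4) =
      -(2 * π ^ 2 / lam ^ 2) * (t + n) ^ 2 := by
      push_cast; ring
    rw [this]; ring
  rw [this, Real.norm_of_nonneg (by positivity), mul_assoc, ← Real.exp_add]
  gcongr
  have h0 : 0 ≤ π ^ 2 / lam ^ 2 := by positivity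
  have h1 : (n : ℝ) ^ 2 / 2 - 1 ≤ (t + n) ^ 2 := by
    nlinarith [sq_nonneg (2 * t + n), ht.1, ht.2]
  have h2 := mul_le_mul_of_nonneg_left h1 h0
  have h3 : 2 * π ^ 2 / lam ^ 2 = 2 * (π ^ 2 / lam ^ 2) := by ring
  rw [h3]
  linarith

lemma aux_finite (lam : ℝ) (hlam : 0 < lam) (c : ℤ → ℂ) (F : Finset ℤ) :
    (2 * π / lam * ⨅ w : ℝ, ∑' l : ℤ, (gaussFT ((w + 2 * π * l) / lam)) ^ 2) *
      ∑ k ∈ F, ‖c k‖ ^ 2 ≤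
    (∑ p ∈ F ×ˢ F, c p.1 * conj (c p.2) *
      ((√(π / 2) * Real.exp (-(lam * (p.1 - p.2 : ℤ)) ^ 2 / 2) : ℝ) : ℂ)).re := by
  set H : ℝ → ℝ := fun t => 2 * π / lam * gaussFT (2 * π * t / lam) ^ 2 with hH
  set P : ℝ → ℂ := fun t => ∑ k ∈ F, c k * Complex.exp (2 * π * Complex.I * k * t) with hP
  set m : ℝ := (2 * π / lam * ⨅ w : ℝ, ∑' l : ℤ, (gaussFT ((w + 2 * π * l) / lam)) ^ 2) with hm
  have hPc : Continuous P := by simp only [hP]; fun_prop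
  have hHc : Continuous H := by simp only [hH, gaussFT]; fun_prop
  have hPper : ∀ (t : ℝ) (n : ℤ), P (t + n) = P t := by
    intro t n
    simp only [hP]
    refine Finset.sum_congr rfl fun k _ => ?_
    have := Complex.exp_int_mul_two_pi_mul_I (k * n)
    rw [show (2 * π * Complex.I * k * ((t + n : ℝ) : ℂ)) =
      2 * π * Complex.I * k * t + ((k * n : ℤ) : ℂ) * (2 * π * Complex.I) by push_cast; ring,
      Complex.exp_add, this, mul_one]
  have e1 := aux_quad volume H (aux_integrable_H lam hlam) c F
  simp only [hH] at e1
  simp_rw [aux_FT lam hlam] at e1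
  rw [← e1, Complex.ofReal_re]
  have e2 := aux_quad (volume.restrict (Set.Ioc (0 : ℝ) 1)) (fun _ => 1) (integrable_const _) c F
  simp only [Complex.ofReal_one, one_mul, aux_orth] at e2
  have e3 : ∫ t in Set.Ioc (0 : ℝ) 1, ‖P t‖ ^ 2 = ∑ k ∈ F, ‖c k‖ ^ 2 := by
    rw [← Complex.ofReal_inj, e2, Finset.sum_product]
    push_cast
    refine Finset.sum_congr rfl fun j hj => ?_
    simp [sub_eq_zero, hj, Complex.mul_conj']
  rw [← e3, ← integral_const_mul]
  change _ ≤ ∫ t, H t * ‖P t‖ ^ 2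
  have hHnn : ∀ t, 0 ≤ H t := fun t => by simp only [hH]; positivity
  obtain ⟨M, hM⟩ : ∃ M, ∀ t, ‖P t‖ ^ 2 ≤ M := by
    refine ⟨(∑ k ∈ F, ‖c k‖) ^ 2, fun t => ?_⟩
    gcongr
    refine (norm_sum_le _ _).trans (Finset.sum_le_sum fun k _ => ?_)
    rw [norm_mul, show (2 * π * Complex.I * k * t : ℂ) = ((2 * π * k * t : ℝ) : ℂ) * Complex.I by
      push_cast; ring, Complex.norm_exp_ofReal_mul_I, mul_one]
  have hint : Integrable fun t => H t * ‖P t‖ ^ 2 :=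
    (aux_integrable_H lam hlam).mul_bdd (c := M) (by fun_prop)
      (ae_of_all _ fun t => by rw [Real.norm_of_nonneg (by positivity)]; exact hM t)
  have hs := hint.hasSum_intervalIntegral_comp_add_int
  simp_rw [hPper, intervalIntegral.integral_of_le zero_le_one] at hs
  have hint2 : ∀ n : ℤ, Integrable (fun t => H (t + n) * ‖P t‖ ^ 2)
      (volume.restrict (Set.Ioc (0 : ℝ) 1)) := by
    intro n
    exact (Continuous.integrableOn_Ioc (by fun_prop))
  have hs2 := hasSum_integral_of_summable_integral_norm hint2 (by
    refine hs.summable.congr fun n => ?_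
    congr 1
    funext t
    rw [Real.norm_of_nonneg (mul_nonneg (hHnn _) (by positivity))])
  rw [hs.unique hs2]
  simp_rw [tsum_mul_right]
  have hb := aux_H_bound lam hlam
  have hsb : Summable fun n : ℤ => (π / lam * Real.exp (2 * π ^ 2 / lam ^ 2)) *
      Real.exp (-(π ^ 2 / lam ^ 2) * (n : ℝ) ^ 2) :=
    (aux_summable_gauss (by positivity)).mul_left _
  have hcont : ContinuousOn (fun t => ∑' n : ℤ, H (t + n)) (Set.Icc 0 1) :=
    continuousOn_tsum (fun n => by fun_prop) hsb (fun n t ht => hb t ht n)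
  refine integral_mono ?_ ?_ ?_
  · exact Continuous.integrableOn_Ioc (by fun_prop)
  · exact ((hcont.mul (by fun_prop)).integrableOn_Icc).mono_set Set.Ioc_subset_Icc_self
  · intro t
    dsimp only
    gcongr
    simp only [hm, hH]
    rw [tsum_mul_left]
    gcongr
    have hbdd : BddBelow (Set.range fun w : ℝ => ∑' l : ℤ, (gaussFT ((w + 2 * π * l) / lam)) ^ 2) :=
      ⟨0, by rintro _ ⟨w, rfl⟩; exact tsum_nonneg fun l => by positivity⟩
    refine (ciInf_le hbdd (2 * π * t)).trans (le_of_eq ?_)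
    simp_rw [mul_add]

theorem l2_lower_bound_for_gaussian_translates
    (lam : ℝ) (hlam : 0 < lam) (c : ℤ → ℂ)
    (hc : Summable fun k : ℤ => ‖c k‖ ^ 2) :
    ∫ x : ℝ, ‖∑' k : ℤ, c k * (gauss (x - lam * k) : ℂ)‖ ^ 2 ≥
      (2 * Real.pi / lam * ⨅ w : ℝ, ∑' l : ℤ, (gaussFT ((w + 2 * Real.pi * l) / lam)) ^ 2) *
        ∑' k : ℤ, ‖c k‖ ^ 2 := by
  have hgnn : ∀ x, 0 ≤ gauss x := fun x => (Real.exp_pos _).le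
  set g : ℤ → ℝ := fun n => √(π / 2) * Real.exp (-(lam * n) ^ 2 / 2) with hg
  have hgs : Summable g := by
    refine ((aux_summable_gauss (s := lam ^ 2 / 2) (by positivity)).mul_left (√(π / 2))).congr ?_
    intro n
    simp only [hg]
    ring_nf
  have hgn : ∀ n, 0 ≤ g n := fun n => by simp only [hg]; positivity
  have hov : ∀ p : ℤ × ℤ, ∫ x : ℝ, gauss (x - lam * p.1) * gauss (x - lam * p.2) = g (p.1 - p.2) := by
    intro p
    rw [aux_overlap]
    simp only [hg]
    push_cast
    ring_nf
  -- summability of the double series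
  have hA : Summable fun p : ℤ × ℤ => ‖c p.1‖ ^ 2 * g (p.1 - p.2) := by
    have h := hc.mul_of_nonneg hgs (fun k => by positivity) hgn
    let e : ℤ × ℤ ≃ ℤ × ℤ := ⟨fun p => (p.1, p.1 - p.2), fun p => (p.1, p.1 - p.2),
      fun p => by simp, fun p => by simp⟩
    exact e.summable_iff.mpr h
  have hB : Summable fun p : ℤ × ℤ => ‖c p.2‖ ^ 2 * g (p.1 - p.2) := by
    have h := hc.mul_of_nonneg hgs (fun k => by positivity) hgn
    let e : ℤ × ℤ ≃ ℤ × ℤ := ⟨fun p => (p.2, p.1 - p.2), fun p => (p.1 + p.2, p.1),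
      fun p => by simp, fun p => by simp⟩
    exact e.summable_iff.mpr h
  have hC : Summable fun p : ℤ × ℤ => ‖c p.1‖ * ‖c p.2‖ * g (p.1 - p.2) := by
    refine Summable.of_nonneg_of_le (fun p => mul_nonneg (by positivity) (hgn _)) (fun p => ?_) (hA.add hB)
    rw [← add_mul]
    refine mul_le_mul_of_nonneg_right ?_ (hgn _)
    nlinarith [sq_nonneg (‖c p.1‖ - ‖c p.2‖), sq_nonneg (‖c p.1‖), sq_nonneg (‖c p.2‖)]
  have hpt : ∀ x : ℝ, Summable fun k : ℤ => ‖c k * (gauss (x - lam * k) : ℂ)‖ := by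
    intro x
    have h1 := (aux_summable_gauss (s := lam ^ 2 / 2) (by positivity)).mul_left (Real.exp (x ^ 2))
    refine Summable.of_nonneg_of_le (fun k => norm_nonneg _) (fun k => ?_) (hc.add h1)
    rw [norm_mul, Complex.norm_real, Real.norm_of_nonneg (hgnn _)]
    have h2 : gauss (x - lam * k) ≤ Real.exp (x ^ 2) * Real.exp (-(lam ^ 2 / 2) * (k : ℝ) ^ 2) := by
      rw [gauss, ← Real.exp_add]
      gcongr
      nlinarith [sq_nonneg (2 * x - lam * k)]
    have h3 : gauss (x - lam * k) ≤ 1 := by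
      rw [gauss]
      exact Real.exp_le_one_iff.mpr (by nlinarith [sq_nonneg (x - lam * k)])
    nlinarith [sq_nonneg (‖c k‖ - gauss (x - lam * k)), hgnn (x - lam * k), norm_nonneg (c k),
      mul_le_mul_of_nonneg_left h3 (hgnn (x - lam * k)), sq_nonneg (‖c k‖)]
  let T : ℤ × ℤ → ℝ → ℂ := fun p x =>
    c p.1 * conj (c p.2) * ((gauss (x - lam * p.1) * gauss (x - lam * p.2) : ℝ) : ℂ)
  have hTint : ∀ p, Integrable (T p) := fun p => (aux_overlap_int _ _).ofReal.const_mul _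
  have hTs := hasSum_integral_of_summable_integral_norm hTint (by
    refine hC.congr fun p => ?_
    rw [← hov, ← integral_const_mul]
    congr 1
    funext x
    simp only [T, norm_mul, Complex.norm_real, RCLike.norm_conj]
    rw [Real.norm_of_nonneg (hgnn _), Real.norm_of_nonneg (hgnn _)])
  have hsq : ∀ x : ℝ, ∑' p, T p x = ((‖∑' k : ℤ, c k * (gauss (x - lam * k) : ℂ)‖ ^ 2 : ℝ) : ℂ) := by
    intro x
    push_cast
    rw [← Complex.mul_conj', Complex.conj_tsum, tsum_mul_tsum_of_summable_norm (hpt x)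
      (by simpa only [RCLike.norm_conj] using hpt x)]
    refine tsum_congr fun p => ?_
    simp only [T, map_mul, Complex.conj_ofReal]
    push_cast
    ring
  simp_rw [hsq] at hTs
  rw [integral_complex_ofReal] at hTs
  have hTv : ∀ p, ∫ x, T p x = c p.1 * conj (c p.2) * (g (p.1 - p.2) : ℂ) := by
    intro p
    simp only [T]
    rw [integral_const_mul, integral_complex_ofReal, hov]
  simp_rw [hTv] at hTs
  have hlim := (Complex.continuous_re.tendsto _).comp
    (Filter.Tendsto.comp hTs (Filter.tendsto_finsetProd_atTop.comp Filter.tendsto_atTop_diagonal))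
  refine le_of_tendsto_of_tendsto' (hc.hasSum.mul_left _) hlim fun F => ?_
  rw [← Finset.mul_sum]
  exact aux_finite lam hlam c F
end

section
/- Let φ(x) = exp(-x²), so that its Fourier transform is φ̂(ω) = (1/√2) exp(-ω²/4), and for λ > 0 define μ(λ) := (2π/λ) · inf_{ω∈ℝ} Σ_{l∈ℤ} |φ̂((ω + 2πl)/λ)|². Then for every λ > 0, μ(λ) ≥ (π/λ) · exp(-π²/(2λ²)). -/
open Real

/-- `μ(λ) = (2π/λ) · inf_ω Σ_l |φ̂((ω + 2πl)/λ)|²`. -/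
noncomputable def mu (lam : ℝ) : ℝ :=
  2 * Real.pi / lam * ⨅ w : ℝ, ∑' l : ℤ, (gaussFT ((w + 2 * Real.pi * l) / lam)) ^ 2

lemma gaussFT_sq (x : ℝ) : gaussFT x ^ 2 = 1 / 2 * Real.exp (-x ^ 2 / 2) := by
  unfold gaussFT
  rw [mul_pow, div_pow, Real.sq_sqrt (by norm_num), ← Real.exp_nat_mul]
  norm_num
  ring

lemma gaussFT_summable (lam : ℝ) (hlam : 0 < lam) (w : ℝ) :
    Summable fun l : ℤ => (gaussFT ((w + 2 * Real.pi * l) / lam)) ^ 2 := by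
  have h := summable_pow_mul_jacobiTheta₂_term_bound (|w| / lam ^ 2)
    (T := 2 * Real.pi / lam ^ 2) (by positivity) 0
  refine Summable.of_nonneg_of_le (fun l => sq_nonneg _) (fun l => ?_) h
  rw [gaussFT_sq]
  have h1 : Real.exp (-((w + 2 * Real.pi * l) / lam) ^ 2 / 2) ≤
      Real.exp (-Real.pi * (2 * Real.pi / lam ^ 2 * (l : ℝ) ^ 2
        - 2 * (|w| / lam ^ 2) * |(l : ℝ)|)) := by
    apply Real.exp_le_exp.mpr
    have h2 : -|w| * |(l : ℝ)| ≤ w * l := by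
      rw [neg_mul, ← abs_mul]; exact neg_abs_le _
    have h3 : 0 ≤ Real.pi * (w * l + |w| * |(l : ℝ)|) := 
      mul_nonneg Real.pi_pos.le (by linarith)
    have h4 : -Real.pi * (2 * Real.pi / lam ^ 2 * (l : ℝ) ^ 2
        - 2 * (|w| / lam ^ 2) * |(l : ℝ)|) - (-((w + 2 * Real.pi * l) / lam) ^ 2 / 2)
        = (w ^ 2 / 2 + 2 * (Real.pi * (w * l + |w| * |(l : ℝ)|))) / lam ^ 2 := by
      field_simp
      ring
    have h5 : 0 ≤ (w ^ 2 / 2 + 2 * (Real.pi * (w * l + |w| * |(l : ℝ)|))) / lam ^ 2 := by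
      positivity
    linarith
  have h0 := Real.exp_pos (-((w + 2 * Real.pi * l) / lam) ^ 2 / 2)
  simp only [pow_zero, one_mul, Int.cast_abs] 
  linarith

theorem mu_lower_bound (lam : ℝ) (hlam : 0 < lam) :
    mu lam ≥ Real.pi / lam * Real.exp (-Real.pi ^ 2 / (2 * lam ^ 2)) := by
  have hpi := Real.pi_pos
  have key : 1 / 2 * Real.exp (-Real.pi ^ 2 / (2 * lam ^ 2)) ≤
      ⨅ w : ℝ, ∑' l : ℤ, (gaussFT ((w + 2 * Real.pi * l) / lam)) ^ 2 := by
    refine le_ciInf fun w => ?_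
    refine le_trans ?_ ((gaussFT_summable lam hlam w).le_tsum (-round (w / (2 * Real.pi)))
      (fun _ _ => sq_nonneg _))
    rw [gaussFT_sq]
    have h1 := abs_sub_round (w / (2 * Real.pi))
    set n := round (w / (2 * Real.pi))
    have h2 : w + 2 * Real.pi * ((-n : ℤ) : ℝ) = 2 * Real.pi * (w / (2 * Real.pi) - n) := by
      push_cast
      field_simp
      ring
    have h3 : (w + 2 * Real.pi * ((-n : ℤ) : ℝ)) ^ 2 ≤ Real.pi ^ 2 := by
      rw [sq_le_sq, h2, abs_mul, abs_of_pos (by positivity : 0 < 2 * Real.pi), abs_of_pos hpi]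
      nlinarith
    have h4 : -Real.pi ^ 2 / (2 * lam ^ 2) ≤
        -((w + 2 * Real.pi * ((-n : ℤ) : ℝ)) / lam) ^ 2 / 2 := by
      rw [div_pow, ← neg_div, div_div, mul_comm (lam ^ 2) 2]
      gcongr
    have := Real.exp_le_exp.mpr h4
    linarith
  unfold mu
  calc Real.pi / lam * Real.exp (-Real.pi ^ 2 / (2 * lam ^ 2))
      = 2 * Real.pi / lam * (1 / 2 * Real.exp (-Real.pi ^ 2 / (2 * lam ^ 2))) := by ring
    _ ≤ _ := mul_le_mul_of_nonneg_left key (by positivity)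
end

section
/- Let φ(x) = exp(-x²). Then for every λ ∈ (0, 1), ‖P_∞(λ, ·)‖_∞ ≥ (3π/(64λ)) · exp(-π²/(2λ²)). -/
open Real

/-- The Fourier cosine coefficients of the auxiliary function `H`. -/
noncomputable def a : ℕ → ℝ
  | 0 => 3 / 4
  | 1 => 4 / (3 * Real.pi)
  | 2 => -(1 / 4)
  | k => -4 * Real.sin (k * Real.pi / 2) / (Real.pi * k * (k ^ 2 - 4))

/-- `A_∞(λ) = -Σ_{k=1}^∞ a_k φ(λk)`. -/
noncomputable def Ainf (φ : ℝ → ℝ) (lam : ℝ) : ℝ :=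
  -∑' k : ℕ, a (k + 1) * φ (lam * (k + 1))

/-- `P_∞(λ, x) = 2 A_∞(λ) φ(x) + Σ_{k=1}^∞ a_k (φ(x + λk) + φ(x - λk))`. -/
noncomputable def Pinf (φ : ℝ → ℝ) (lam x : ℝ) : ℝ :=
  2 * Ainf φ lam * φ x +
    ∑' k : ℕ, a (k + 1) * (φ (x + lam * (k + 1)) + φ (x - lam * (k + 1)))


open MeasureTheory ProbabilityTheory

noncomputable def Gf (x : ℝ) : ℝ := (min (Real.cos x) 0) ^ 2

lemma a_formula (k : ℕ) (h0 : k ≠ 0) (h2 : k ≠ 2) :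
    a k = -4 * Real.sin (k * Real.pi / 2) / (Real.pi * k * (k ^ 2 - 4)) := by
  match k with
  | 0 => exact absurd rfl h0
  | 1 =>
    have : Real.sin ((1 : ℕ) * Real.pi / 2) = 1 := by simp
    rw [a, this]
    have := Real.pi_ne_zero
    push_cast
    field_simp
    norm_num
  | 2 => exact absurd rfl h2
  | k + 3 => rw [a] <;> omega

noncomputable def Jf (m : ℤ) : ℂ :=
  ∫ x in (Real.pi / 2)..(3 * Real.pi / 2), Complex.exp ((m * Complex.I) * (x : ℝ))

lemma Jf_zero : Jf 0 = Real.pi := by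
  simp [Jf]
  ring

lemma Jf_ne (m : ℤ) (hm : m ≠ 0) :
    Jf m = (Complex.exp (m * Real.pi / 2 * Complex.I) ^ 3
      - Complex.exp (m * Real.pi / 2 * Complex.I)) / (m * Complex.I) := by
  have hm' : (m : ℂ) ≠ 0 := by exact_mod_cast hm
  rw [Jf, integral_exp_mul_complex (mul_ne_zero hm' Complex.I_ne_zero), ← Complex.exp_nat_mul]
  congr 2
  · congr 1; push_cast; ring
  · congr 1; push_cast; ring

lemma Jf_even (m : ℤ) (hm : m ≠ 0) : Jf (2 * m) = 0 := by
  rw [Jf_ne _ (by omega)]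
  have h1 : Complex.exp ((2 * m : ℤ) * Real.pi / 2 * Complex.I) ^ 2 = 1 := by
    rw [← Complex.exp_nat_mul, Complex.exp_eq_one_iff]
    exact ⟨m, by push_cast; ring⟩
  rw [pow_succ, h1]; simp

lemma Gint (n : ℤ) : ∫ x in (Real.pi / 2)..(3 * Real.pi / 2),
    Complex.exp (-(n * Complex.I) * (x : ℝ)) * ((Real.cos x ^ 2 : ℝ) : ℂ)
    = (2 * Jf (-n) + Jf (2 - n) + Jf (-2 - n)) / 4 := by
  have hi : ∀ c : ℂ, IntervalIntegrable (fun x : ℝ => Complex.exp (c * (x : ℝ))) volume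
      (Real.pi / 2) (3 * Real.pi / 2) := fun c => by
    apply Continuous.intervalIntegrable; fun_prop
  unfold Jf
  rw [← intervalIntegral.integral_const_mul, ← intervalIntegral.integral_add ((hi _).const_mul _) (hi _),
    ← intervalIntegral.integral_add (((hi _).const_mul _).add (hi _)) (hi _),
    ← intervalIntegral.integral_div]
  congr 1
  ext x
  push_cast
  have e1 : Complex.exp ((2 - (n : ℂ)) * Complex.I * x) =
      Complex.exp (-(n * Complex.I) * x) * Complex.exp (x * Complex.I) ^ 2 := by
    rw [← Complex.exp_nat_mul, ← Complex.exp_add]; congr 1; push_cast; ring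
  have e2 : Complex.exp ((-2 - (n : ℂ)) * Complex.I * x) =
      Complex.exp (-(n * Complex.I) * x) * Complex.exp (-x * Complex.I) ^ 2 := by
    rw [← Complex.exp_nat_mul, ← Complex.exp_add]; congr 1; push_cast; ring
  have e3 : Complex.exp (x * Complex.I) * Complex.exp (-x * Complex.I) = 1 := by
    rw [← Complex.exp_add]; simp
  have e4 : Complex.exp (-(n : ℂ) * Complex.I * x) = Complex.exp (-(n * Complex.I) * x) := by
    congr 1; ring
  rw [e1, e2, e4, Complex.cos]
  linear_combination (Complex.exp (-(n * Complex.I) * x)) * e3 / 2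

noncomputable def cf (n : ℤ) : ℝ := if n = 0 then 1 / 4 else -(a n.natAbs) / 2

lemma a_abs_formula (n : ℤ) (h0 : n ≠ 0) (h2 : n ≠ 2) (h3 : n ≠ -2) :
    a n.natAbs = -4 * Real.sin (n * Real.pi / 2) / (Real.pi * n * (n ^ 2 - 4)) := by
  rw [a_formula _ (by omega) (by omega)]
  rcases Int.natAbs_eq n with h | h
  · have : (n : ℝ) = (n.natAbs : ℝ) := by
      conv_lhs => rw [h]
      exact Int.cast_natCast _
    rw [this]
  · have : (n : ℝ) = -(n.natAbs : ℝ) := by exact_mod_cast congrArg (Int.cast (R := ℝ)) h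
    rw [this]
    have : -(n.natAbs : ℝ) * Real.pi / 2 = -((n.natAbs : ℝ) * Real.pi / 2) := by ring
    rw [this, Real.sin_neg, neg_sq, mul_neg, mul_neg, neg_mul (Real.pi * _), neg_div_neg_eq]

lemma Gint_eq (n : ℤ) : (2 * Jf (-n) + Jf (2 - n) + Jf (-2 - n)) / 4 = 2 * Real.pi * cf n := by
  have hpi : (Real.pi : ℂ) ≠ 0 := by exact_mod_cast Real.pi_ne_zero
  by_cases h0 : n = 0
  · subst h0
    have := Jf_even 1 (by norm_num)
    have h' := Jf_even (-1) (by norm_num)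
    norm_num at this h'
    simp [Jf_zero, this, h', cf]
    ring
  by_cases h2 : n = 2
  · subst h2
    have := Jf_even (-1) (by norm_num)
    have h' := Jf_even (-2) (by norm_num)
    norm_num at this h'
    norm_num [Jf_zero, this, h', cf, a]
    ring
  by_cases h3 : n = -2
  · subst h3
    have := Jf_even (1) (by norm_num)
    have h' := Jf_even (2) (by norm_num)
    norm_num at this h'
    norm_num [Jf_zero, this, h', cf, a]
    ring
  rw [cf, if_neg h0, a_abs_formula n h0 h2 h3, Jf_ne _ (by omega), Jf_ne _ (by omega), Jf_ne _ (by omega)]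
  set z := Complex.exp ((-n : ℤ) * Real.pi / 2 * Complex.I) with hz
  have z4 : z ^ 4 = 1 := by
    rw [hz, ← Complex.exp_nat_mul, Complex.exp_eq_one_iff]
    exact ⟨-n, by push_cast; ring⟩
  have e1 : Complex.exp ((2 - n : ℤ) * Real.pi / 2 * Complex.I) = - z := by
    have : ((2 - n : ℤ) * Real.pi / 2 * Complex.I : ℂ) = Real.pi * Complex.I + (-n : ℤ) * Real.pi / 2 * Complex.I := by
      push_cast; ring
    rw [this, Complex.exp_add, Complex.exp_pi_mul_I, hz]; ring
  have e2 : Complex.exp ((-2 - n : ℤ) * Real.pi / 2 * Complex.I) = - z := by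
    have : ((-2 - n : ℤ) * Real.pi / 2 * Complex.I : ℂ) = -(Real.pi * Complex.I) + (-n : ℤ) * Real.pi / 2 * Complex.I := by
      push_cast; ring
    rw [this, Complex.exp_add, Complex.exp_neg, Complex.exp_pi_mul_I, hz]; ring
  have es : Complex.sin (n * Real.pi / 2) = (z - z ^ 3) * Complex.I / 2 := by
    have zz : z⁻¹ = z ^ 3 := inv_eq_of_mul_eq_one_right (by linear_combination z4)
    rw [Complex.sin, ← zz, hz, ← Complex.exp_neg]
    congr 4
    · congr 1; push_cast; ring
    · congr 1; push_cast; ring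
  have n0 : (n : ℂ) ≠ 0 := by exact_mod_cast h0
  have n2 : (2 - n : ℂ) ≠ 0 := by
    intro h; apply h2; have : (n : ℂ) = (2 : ℤ) := by push_cast; linear_combination -h
    exact_mod_cast this
  have n3 : (-2 - n : ℂ) ≠ 0 := by
    intro h; apply h3; have : (n : ℂ) = (-2 : ℤ) := by push_cast; linear_combination -h
    exact_mod_cast this
  have n4 : (n ^ 2 - 4 : ℂ) ≠ 0 := by
    have : (n ^ 2 - 4 : ℂ) = (2 - n) * (-2 - n) := by ring
    rw [this]; exact mul_ne_zero n2 n3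
  have I0 := Complex.I_ne_zero
  rw [e1, e2]
  push_cast
  rw [es]
  have d1 : (2 * ((z ^ 3 - z) / (-(n : ℂ) * Complex.I)) + ((-z) ^ 3 - -z) / ((2 - (n : ℂ)) * Complex.I)
      + ((-z) ^ 3 - -z) / ((-2 - (n : ℂ)) * Complex.I)) / 4
      = (z ^ 3 - z) / Complex.I * (2 / (n * (n ^ 2 - 4))) := by
    have : (n ^ 2 - 4 : ℂ) = (2 - n) * (-2 - n) := by ring
    rw [this]
    field_simp
    ring
  rw [d1, Complex.div_I]
  field_simp
  ring

lemma a_bound (k : ℕ) : |a (k + 1)| ≤ 2 * (1 / ((k + 1 : ℕ) : ℝ) ^ 2) := by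
  by_cases h1 : k = 1
  · subst h1
    norm_num [a]
  by_cases h0 : k = 0
  · subst h0
    have := Real.pi_gt_three
    norm_num [a]
    rw [abs_of_pos (by positivity)]
    rw [div_le_iff₀ (by positivity)]
    linarith
  rw [a_formula _ (by omega) (by omega)]
  have hk : (3 : ℝ) ≤ ((k + 1 : ℕ) : ℝ) := by
    have : 3 ≤ k + 1 := by omega
    exact_mod_cast this
  set m := ((k + 1 : ℕ) : ℝ)
  have hp := Real.pi_gt_three
  have hs := Real.abs_sin_le_one (m * Real.pi / 2)
  have hd : 0 < Real.pi * m * (m ^ 2 - 4) := by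
    have : 0 < m ^ 2 - 4 := by nlinarith
    positivity
  rw [abs_div, abs_of_pos hd, div_le_iff₀ hd, abs_mul]
  have h4 : m ≤ m ^ 2 - 4 := by nlinarith
  have : 2 * (1 / m ^ 2) * (Real.pi * m * (m ^ 2 - 4)) ≥ 2 * (1 / m ^ 2) * (Real.pi * m * m) := by
    gcongr
  have e : 2 * (1 / m ^ 2) * (Real.pi * m * m) = 2 * Real.pi := by
    field_simp
  rw [abs_neg, abs_of_pos (by norm_num : (0 : ℝ) < 4)]
  linarith

lemma a_summable : Summable (fun k : ℕ => |a (k + 1)|) := by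
  refine Summable.of_nonneg_of_le (fun _ => abs_nonneg _) a_bound ?_
  apply Summable.mul_left
  exact (summable_nat_add_iff 1).2 (Real.summable_one_div_nat_pow.2 (by norm_num : 1 < 2))

lemma cf_summable : Summable (fun n : ℤ => cf n) := by
  have h : Summable (fun k : ℕ => a k) := (summable_nat_add_iff 1).1 (a_summable.of_abs)
  have h1 : Summable (fun k : ℕ => cf k) := by
    rw [← summable_nat_add_iff 1]
    refine (((summable_nat_add_iff 1).2 h).neg.div_const 2).congr fun k => ?_
    rw [cf, if_neg (by omega)]
    rfl
  refine Summable.of_nat_of_neg h1 (h1.congr fun k => ?_)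
  simp [cf]

lemma Gf_cont : Continuous Gf := by unfold Gf; fun_prop

lemma Gf_periodic : Function.Periodic (fun x => ((Gf x : ℝ) : ℂ)) (2 * Real.pi) := by
  intro x; simp [Gf]

noncomputable def GC : C(AddCircle (2 * Real.pi), ℂ) where
  toFun := Gf_periodic.lift
  continuous_toFun := by
    apply continuous_coinduced_dom.mpr
    exact Complex.continuous_ofReal.comp Gf_cont

lemma GC_coe (x : ℝ) : GC (x : AddCircle (2 * Real.pi)) = (Gf x : ℝ) := rfl

instance factPi : Fact (0 < 2 * Real.pi) := ⟨Real.two_pi_pos⟩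

lemma fourier_two_pi (n : ℤ) (x : ℝ) :
    fourier n (x : AddCircle (2 * Real.pi)) = Complex.exp (n * Complex.I * x) := by
  have hpi : (Real.pi : ℂ) ≠ 0 := by exact_mod_cast Real.pi_ne_zero
  rw [fourier_coe_apply]
  congr 1
  push_cast
  field_simp

lemma GC_coeff (n : ℤ) : fourierCoeff GC n = (cf n : ℂ) := by
  have hp := Real.pi_pos
  rw [fourierCoeff_eq_intervalIntegral _ _ (Real.pi / 2)]
  have hc : Continuous (fun x : ℝ => fourier (-n) (x : AddCircle (2 * Real.pi)) • GC (x : AddCircle (2 * Real.pi))) := by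
    simp_rw [fourier_two_pi, GC_coe]
    have := Gf_cont
    fun_prop
  rw [← intervalIntegral.integral_add_adjacent_intervals (b := 3 * Real.pi / 2)
    (hc.intervalIntegrable _ _) (hc.intervalIntegrable _ _)]
  have i1 : ∫ x in (Real.pi / 2)..(3 * Real.pi / 2),
      fourier (-n) (x : AddCircle (2 * Real.pi)) • GC (x : AddCircle (2 * Real.pi)) =
      2 * Real.pi * cf n := by
    rw [← Gint_eq, ← Gint]
    apply intervalIntegral.integral_congr
    intro x hx
    rw [Set.uIcc_of_le (by linarith)] at hx
    simp only [fourier_two_pi, GC_coe, Gf, smul_eq_mul]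
    rw [min_eq_left (Real.cos_nonpos_of_pi_div_two_le_of_le hx.1 (by linarith [hx.2]))]
    push_cast
    simp
  have i2 : ∫ x in (3 * Real.pi / 2)..(Real.pi / 2 + 2 * Real.pi),
      fourier (-n) (x : AddCircle (2 * Real.pi)) • GC (x : AddCircle (2 * Real.pi)) = 0 := by
    rw [← intervalIntegral.integral_zero (a := 3 * Real.pi / 2) (b := Real.pi / 2 + 2 * Real.pi)]
    apply intervalIntegral.integral_congr
    intro x hx
    rw [Set.uIcc_of_le (by linarith)] at hx
    simp only [fourier_two_pi, GC_coe, Gf, smul_eq_mul]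
    have : 0 ≤ Real.cos x := by
      rw [← Real.cos_sub_two_pi]
      exact Real.cos_nonneg_of_neg_pi_div_two_le_of_le (by linarith [hx.1]) (by linarith [hx.2])
    rw [min_eq_right this]
    simp
  rw [i1, i2, add_zero]
  have hpi : (Real.pi : ℂ) ≠ 0 := by exact_mod_cast Real.pi_ne_zero
  rw [Complex.real_smul]
  push_cast
  field_simp

lemma H_hasSum (y : ℝ) :
    HasSum (fun k : ℕ => a (k + 1) * Real.cos ((k + 1) * y)) (1 / 4 - Gf y) := by
  have hs : Summable (fourierCoeff GC) := by
    have : fourierCoeff GC = fun n => ((cf n : ℝ) : ℂ) := funext GC_coeff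
    rw [this]
    exact Complex.summable_ofReal.2 cf_summable
  have h := has_pointwise_sum_fourier_series_of_summable hs (y : AddCircle (2 * Real.pi))
  have h1 := Complex.hasSum_re h
  have h2 := h1.nat_add_neg
  rw [← hasSum_nat_add_iff' 1] at h2
  have key : ∀ n : ℤ, (fourierCoeff GC n • fourier n (y : AddCircle (2 * Real.pi))).re
      = cf n * Real.cos (n * y) := by
    intro n
    rw [GC_coeff, fourier_two_pi, smul_eq_mul, Complex.re_ofReal_mul]
    congr 1
    have : (n * Complex.I * y : ℂ) = ((n * y : ℝ) : ℂ) * Complex.I := by push_cast; ring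
    rw [this, Complex.exp_ofReal_mul_I_re]
  simp only [key] at h2
  have h3 := h2.neg
  have hf : (fun k : ℕ => a (k + 1) * Real.cos ((k + 1) * y)) = fun k : ℕ =>
      -(cf ((k + 1 : ℕ) : ℤ) * Real.cos ((((k + 1 : ℕ) : ℤ) : ℝ) * y)
        + cf (-((k + 1 : ℕ) : ℤ)) * Real.cos (((-((k + 1 : ℕ) : ℤ) : ℤ) : ℝ) * y)) := by
    ext k
    have e1 : cf ((k + 1 : ℕ) : ℤ) = - a (k + 1) / 2 := by
      rw [cf, if_neg (by omega)]; rfl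
    have e2 : cf (-((k + 1 : ℕ) : ℤ)) = - a (k + 1) / 2 := by
      rw [cf, if_neg (by omega), Int.natAbs_neg]; rfl
    rw [e1, e2]
    push_cast
    have h' : (-((k : ℝ) + 1)) * y = -((k + 1) * y) := by ring
    rw [h', Real.cos_neg]
    ring
  rw [hf]
  refine (congrArg (HasSum _ · _) ?_).mp h3
  simp [cf, GC_coe]

lemma gauss_cos (t : ℝ) : ∫ x, Real.cos (t * x) ∂(gaussianReal 0 2) = Real.exp (-t ^ 2) := by
  have h := charFun_gaussianReal (μ := 0) (v := 2) t
  rw [charFun_apply_real] at h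
  have h2 := congrArg Complex.re h
  have hinteg : Integrable (fun x : ℝ => Complex.exp (t * x * Complex.I)) (gaussianReal 0 2) := by
    apply Integrable.of_bound (C := 1) (by fun_prop)
    refine Filter.Eventually.of_forall fun x => ?_
    rw [← Complex.ofReal_mul, Complex.norm_exp_ofReal_mul_I]
  have h3 := integral_re (𝕜 := ℂ) hinteg
  simp only [RCLike.re_to_complex] at h3
  rw [← h3] at h2
  simp only [← Complex.ofReal_mul, Complex.exp_ofReal_mul_I_re] at h2
  rw [h2]
  have : ((t * (0 : ℝ) : ℝ) * Complex.I - ((2 : NNReal) : ℝ) * t ^ 2 / 2 : ℂ) = ((-t ^ 2 : ℝ) : ℂ) := by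
    push_cast; simp
  rw [this, Complex.exp_ofReal_re]

lemma integ_mul (w : ℝ → ℝ) (hw : Continuous w) (hb : ∀ x, |w x| ≤ 1) :
    Integrable w (gaussianReal 0 2) :=
  Integrable.of_bound (C := 1) hw.aestronglyMeasurable (Filter.Eventually.of_forall hb)

lemma swap (w : ℝ → ℝ) (hw : Continuous w) (hb : ∀ x, |w x| ≤ 1) (lam : ℝ) :
    ∑' k : ℕ, a (k + 1) * ∫ x, w x * Real.cos ((k + 1) * (lam * x)) ∂(gaussianReal 0 2) =
      ∫ x, w x * (1 / 4 - Gf (lam * x)) ∂(gaussianReal 0 2) := by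
  have hcb : ∀ (k : ℕ) (x : ℝ), |w x * Real.cos ((k + 1) * (lam * x))| ≤ 1 := fun k x => by
    rw [abs_mul]
    exact mul_le_one₀ (hb x) (abs_nonneg _) (Real.abs_cos_le_one _)
  have hi : ∀ k : ℕ, Integrable (fun x => w x * Real.cos ((k + 1) * (lam * x))) (gaussianReal 0 2) :=
    fun k => integ_mul _ (by fun_prop) (hcb k)
  have := hasSum_integral_of_summable_integral_norm
    (F := fun (k : ℕ) x => a (k + 1) * (w x * Real.cos ((k + 1) * (lam * x))))
    (μ := gaussianReal 0 2) (fun k => (hi k).const_mul _) ?_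
  · have h2 := this.tsum_eq
    simp only [integral_const_mul] at h2
    rw [h2]
    congr 1
    ext x
    rw [← (H_hasSum (lam * x)).tsum_eq, ← tsum_mul_left]
    congr 1
    ext k
    ring
  · refine Summable.of_nonneg_of_le (fun k => integral_nonneg fun x => norm_nonneg _) (fun k => ?_) a_summable
    calc _ ≤ ∫ x, |a (k + 1)| ∂(gaussianReal 0 2) := by
          apply integral_mono ((hi k).const_mul _).norm (integrable_const _)
          intro x
          simp only [Real.norm_eq_abs]
          rw [abs_mul]
          exact mul_le_of_le_one_right (abs_nonneg _) (hcb k x)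
      _ = _ := by simp

lemma Gf_bounds (y : ℝ) : 0 ≤ Gf y ∧ Gf y ≤ 1 := by
  refine ⟨sq_nonneg _, ?_⟩
  unfold Gf
  have := Real.neg_one_le_cos y
  have h1 : -1 ≤ min (Real.cos y) 0 := le_min this (by norm_num)
  have h2 : min (Real.cos y) 0 ≤ 0 := min_le_right _ _
  nlinarith

lemma P_lower (lam : ℝ) :
    2 * ∫ x, (-Real.cos (lam * x)) * Gf (lam * x) ∂(gaussianReal 0 2) ≤
      Pinf (fun t => Real.exp (-t ^ 2)) lam lam := by
  have hA := swap (fun _ => 1) continuous_const (by simp) lam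
  have hB := swap (fun x => Real.cos (lam * x)) (by fun_prop) (fun x => Real.abs_cos_le_one _) lam
  have hGc := Gf_cont
  have hGi : Integrable (fun x => Gf (lam * x)) (gaussianReal 0 2) :=
    integ_mul _ (by fun_prop) (fun x => by
      rw [abs_of_nonneg (Gf_bounds _).1]; exact (Gf_bounds _).2)
  have hci : ∀ t, Integrable (fun x => Real.cos (t * x)) (gaussianReal 0 2) := fun t =>
    integ_mul _ (by fun_prop) (fun x => Real.abs_cos_le_one _)
  have hcGi : Integrable (fun x => Real.cos (lam * x) * Gf (lam * x)) (gaussianReal 0 2) :=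
    integ_mul _ (by fun_prop) (fun x => by
      rw [abs_mul, abs_of_nonneg (Gf_bounds _).1]
      exact mul_le_one₀ (Real.abs_cos_le_one _) (Gf_bounds _).1 (Gf_bounds _).2)
  have hA' : ∑' k : ℕ, a (k + 1) * Real.exp (-(lam * (k + 1)) ^ 2) =
      1 / 4 - ∫ x, Gf (lam * x) ∂(gaussianReal 0 2) := by
    simp only [one_mul] at hA
    rw [integral_sub (integrable_const _) hGi] at hA
    simp only [integral_const, probReal_univ, one_smul] at hA
    rw [← hA]
    congr 1; ext k
    rw [← gauss_cos]
    congr 3; ext x; congr 1; ring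
  have hB' : ∑' k : ℕ, a (k + 1) * (Real.exp (-(lam + lam * (k + 1)) ^ 2)
        + Real.exp (-(lam - lam * (k + 1)) ^ 2)) =
      2 * (1 / 4 * Real.exp (-lam ^ 2)
        - ∫ x, Real.cos (lam * x) * Gf (lam * x) ∂(gaussianReal 0 2)) := by
    have e : ∫ x, Real.cos (lam * x) * (1 / 4 - Gf (lam * x)) ∂(gaussianReal 0 2) =
        1 / 4 * Real.exp (-lam ^ 2)
        - ∫ x, Real.cos (lam * x) * Gf (lam * x) ∂(gaussianReal 0 2) := by
      rw [← gauss_cos, ← integral_const_mul, ← integral_sub ((hci _).const_mul _) hcGi]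
      congr 1; ext x; ring
    rw [← e, ← hB, ← tsum_mul_left]
    congr 1; ext k
    rw [← gauss_cos, ← gauss_cos, ← integral_add (hci _) (hci _), mul_left_comm,
      ← integral_const_mul (2 : ℝ)]
    refine congrArg _ (integral_congr_ae (Filter.Eventually.of_forall fun x => ?_))
    simp only
    rw [add_mul, sub_mul, Real.cos_add, Real.cos_sub]
    have : lam * ((k : ℝ) + 1) * x = (k + 1) * (lam * x) := by ring
    rw [this]; ring
  have hneg : ∫ x, (-Real.cos (lam * x)) * Gf (lam * x) ∂(gaussianReal 0 2)
      = - ∫ x, Real.cos (lam * x) * Gf (lam * x) ∂(gaussianReal 0 2) := by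
    rw [← integral_neg]; congr 1; ext x; ring
  have hnn : 0 ≤ ∫ x, Gf (lam * x) ∂(gaussianReal 0 2) := integral_nonneg fun x => (Gf_bounds _).1
  unfold Pinf Ainf
  rw [hA', hB', hneg]
  have := Real.exp_pos (-lam ^ 2)
  nlinarith [mul_nonneg this.le hnn]

lemma P_bdd (lam : ℝ) : BddAbove (Set.range fun x => |Pinf (fun t => Real.exp (-t ^ 2)) lam x|) := by
  refine ⟨2 * |Ainf (fun t => Real.exp (-t ^ 2)) lam| + ∑' k : ℕ, |a (k + 1)| * 2, ?_⟩
  rintro _ ⟨x, rfl⟩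
  have he : ∀ t : ℝ, Real.exp (-t ^ 2) ≤ 1 := fun t => by
    rw [Real.exp_le_one_iff]; nlinarith [sq_nonneg t]
  simp only [Pinf]
  refine (abs_add_le _ _).trans (add_le_add ?_ ?_)
  · rw [abs_mul, abs_mul, abs_of_pos (Real.exp_pos _), abs_two]
    exact mul_le_of_le_one_right (by positivity) (he x)
  · rw [← Real.norm_eq_abs]
    apply tsum_of_norm_bounded (a_summable.mul_right 2).hasSum
    intro k
    rw [Real.norm_eq_abs, abs_mul]
    gcongr
    rw [abs_of_pos (by positivity)]
    linarith [he (x + lam * (k + 1)), he (x - lam * (k + 1))]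

lemma int_lower (lam : ℝ) (h : 0 < lam) :
    3 * Real.pi / (64 * lam) * Real.exp (-Real.pi ^ 2 / (2 * lam ^ 2)) ≤
    2 * ∫ x, (-Real.cos (lam * x)) * Gf (lam * x) ∂(gaussianReal 0 2) := by
  have hp := Real.pi_pos
  have hnn : ∀ y, 0 ≤ (-Real.cos y) * Gf y := fun y => by
    rcases le_total (Real.cos y) 0 with hy | hy
    · exact mul_nonneg (by linarith) (Gf_bounds _).1
    · simp [Gf, min_eq_right hy]
  have hGc := Gf_cont
  have hinteg : Integrable (fun x => (-Real.cos (lam * x)) * Gf (lam * x)) (gaussianReal 0 2) :=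
    integ_mul _ (by fun_prop) (fun x => by
      rw [abs_mul, abs_neg, abs_of_nonneg (Gf_bounds _).1]
      exact mul_le_one₀ (Real.abs_cos_le_one _) (Gf_bounds _).1 (Gf_bounds _).2)
  set S := Set.Icc (2 * Real.pi / (3 * lam)) (4 * Real.pi / (3 * lam)) with hS
  have h1 : ∫ x in S, (-Real.cos (lam * x)) * Gf (lam * x) ∂(gaussianReal 0 2) ≤
      ∫ x, (-Real.cos (lam * x)) * Gf (lam * x) ∂(gaussianReal 0 2) :=
    setIntegral_le_integral hinteg (Filter.Eventually.of_forall fun x => hnn _)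
  have hmem : ∀ x ∈ S, 2 * Real.pi / 3 ≤ lam * x ∧ lam * x ≤ 4 * Real.pi / 3 := by
    rintro x ⟨hx1, hx2⟩
    rw [div_le_iff₀ (by positivity)] at hx1
    rw [le_div_iff₀ (by positivity)] at hx2
    constructor <;> linarith
  have h2 : (1 / 8 : ℝ) * (gaussianReal 0 2).real S ≤
      ∫ x in S, (-Real.cos (lam * x)) * Gf (lam * x) ∂(gaussianReal 0 2) := by
    apply setIntegral_ge_of_const_le_real measurableSet_Icc (measure_ne_top _ _) _ hinteg.integrableOn
    intro x hx
    obtain ⟨m1, m2⟩ := hmem x hx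
    have hc : Real.cos (lam * x) ≤ -(1 / 2) := by
      have e : Real.cos (lam * x) = - Real.cos |lam * x - Real.pi| := by
        rw [Real.cos_abs, Real.cos_sub_pi, neg_neg]
      rw [e, ← Real.cos_pi_div_three]
      apply neg_le_neg
      apply Real.cos_le_cos_of_nonneg_of_le_pi (abs_nonneg _) (by linarith)
      rw [abs_le]; constructor <;> linarith
    rw [Gf, min_eq_left (by linarith)]
    nlinarith [sq_nonneg (Real.cos (lam * x)), sq_nonneg (Real.cos (lam * x) + 1/2)]
  have hpdf : ∀ x ∈ S, (2 * √Real.pi)⁻¹ * Real.exp (-Real.pi ^ 2 / (2 * lam ^ 2)) ≤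
      gaussianPDFReal 0 2 x := by
    intro x hx
    obtain ⟨m1, m2⟩ := hmem x hx
    rw [gaussianPDFReal]
    have e : √(2 * Real.pi * ((2 : NNReal) : ℝ)) = 2 * √Real.pi := by
      rw [show (2 * Real.pi * ((2 : NNReal) : ℝ)) = 2 ^ 2 * Real.pi by push_cast; ring,
        Real.sqrt_mul (by positivity), Real.sqrt_sq (by norm_num)]
    rw [e]
    apply mul_le_mul_of_nonneg_left _ (by positivity)
    apply Real.exp_le_exp.2
    push_cast
    rw [div_le_div_iff₀ (by positivity) (by positivity)]
    have : (lam * x) ^ 2 ≤ (4 * Real.pi / 3) ^ 2 := by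
      apply pow_le_pow_left₀ _ m2
      linarith
    nlinarith [sq_nonneg Real.pi]
  have h3 : (2 * √Real.pi)⁻¹ * Real.exp (-Real.pi ^ 2 / (2 * lam ^ 2)) * (2 * Real.pi / (3 * lam)) ≤
      (gaussianReal 0 2).real S := by
    rw [measureReal_def, gaussianReal_apply_eq_integral _ (by norm_num), ENNReal.toReal_ofReal
      (integral_nonneg fun x => gaussianPDFReal_nonneg _ _ _)]
    have := setIntegral_ge_of_const_le_real (μ := volume) (s := S) measurableSet_Icc
      (by rw [hS]; simp) hpdf (integrable_gaussianPDFReal 0 2).integrableOn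
    refine le_trans (le_of_eq ?_) this
    congr 1
    rw [measureReal_def, hS, Real.volume_Icc, ENNReal.toReal_ofReal]
    · ring
    · rw [← sub_div]; apply div_nonneg <;> linarith
  have hsq : √Real.pi ≤ 16 / 9 := by
    rw [Real.sqrt_le_left (by norm_num)]
    linarith [Real.pi_lt_d2]
  have hsp : 0 < √Real.pi := Real.sqrt_pos.2 hp
  have hE := Real.exp_pos (-Real.pi ^ 2 / (2 * lam ^ 2))
  have h4 : 3 * Real.pi / (64 * lam) * Real.exp (-Real.pi ^ 2 / (2 * lam ^ 2)) ≤
     2 * (1 / 8 * ((2 * √Real.pi)⁻¹ * Real.exp (-Real.pi ^ 2 / (2 * lam ^ 2)) * (2 * Real.pi / (3 * lam)))) := by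
    have e : 2 * (1 / 8 * ((2 * √Real.pi)⁻¹ * Real.exp (-Real.pi ^ 2 / (2 * lam ^ 2)) * (2 * Real.pi / (3 * lam))))
      = (Real.pi / lam * Real.exp (-Real.pi ^ 2 / (2 * lam ^ 2))) * (1 / (12 * √Real.pi)) := by
      field_simp; norm_num
    have e' : 3 * Real.pi / (64 * lam) * Real.exp (-Real.pi ^ 2 / (2 * lam ^ 2)) =
      (Real.pi / lam * Real.exp (-Real.pi ^ 2 / (2 * lam ^ 2))) * (3 / 64) := by
      field_simp
    rw [e, e']
    apply mul_le_mul_of_nonneg_left _ (by positivity)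
    rw [div_le_div_iff₀ (by norm_num) (by positivity)]
    linarith
  linarith

theorem Pinf_gaussian_sup_norm_lower_bound
    (lam : ℝ) (hlam : lam ∈ Set.Ioo (0 : ℝ) 1) :
    (⨆ x, |Pinf (fun t => Real.exp (-t ^ 2)) lam x|) ≥
      3 * Real.pi / (64 * lam) * Real.exp (-Real.pi ^ 2 / (2 * lam ^ 2)) :=
  ((int_lower lam hlam.1).trans (P_lower lam)).trans
    ((le_abs_self _).trans (le_ciSup (P_bdd lam) lam))
end
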